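/- Let (A_i)_{i∈I} be unital subalgebras of A and (F_j)_{j∈J} subalgebras of F, and let F′ := ℂ·1_B + ⟨F_j : j∈J⟩ be the unital subalgebra of B generated by all the F_j. Then the pair ((A_i)_{i∈I}, (F_j)_{j∈J}) is weakly B′-free in (A, φ, F, Φ) if and only if the family of unital subalgebras of B consisting of A_i (for i ∈ I) together with the single additional subalgebra F′ is infinitesimally free with respect to (φ, φ′). -/

import Mathlib

/-!
Infinitesimal freeness says that the algebras are free for `φ` and that `φ'` satisfies the Leibniz
rule `φ'(b₁ ⋯ bₙ) = ∑ₖ φ(b₁ ⋯ bₖ₋₁ bₖ₊₁ ⋯ bₙ) φ'(bₖ)` on alternating words of centered letters. In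
a word with letters from the `A_i` and from `F₁ = ⟨F_j⟩`, the letters from the `A_i` contribute
nothing because `φ'` vanishes on them, and a letter from `F₁` contributes nothing as soon as there
is another one, because `φ` vanishes on words with a letter from `F₁`. So the Leibniz rule says
that `φ'` vanishes on words with no letter or at least two letters from `F₁`, and that
`φ'(a f b) = φ(a b) φ'(f)` for words `a`, `b` in the `A_i`. For centered words this is
cyclic-antimonotone independence, which is generated by the case `n = 1` and by the rule that
`f₁ a₁ f₂` may be replaced by `φ(a₁) f₁ f₂`.
-/

open scoped BigOperators

namespace TypeBPrime

variable {B : Type*} [Ring B] [Algebra ℂ B]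

/-- The alternating word `a 0 * (f 0 * a 1) * ⋯ * (f (n-1) * a n)`. -/
def altWord {n : ℕ} (a : Fin (n + 1) → B) (f : Fin n → B) : B :=
  a 0 * (List.ofFn fun k : Fin n => f k * a k.succ).prod

/-- Cyclic-antimonotone independence of the pair `(A₁, F₁)` with respect to `(φ, Φ)`:
`Φ(a₀ f₁ a₁ ⋯ fₙ aₙ) = φ(a₀ aₙ) · φ(a₁) ⋯ φ(a_{n-1}) · Φ(f₁ ⋯ fₙ)` for all `n ≥ 1`. -/
def CyclicAntimonotone (φ Φ : B → ℂ) (A₁ F₁ : Set B) : Prop :=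
  ∀ n : ℕ, 0 < n → ∀ (a : Fin (n + 1) → B) (f : Fin n → B),
    (∀ k, a k ∈ A₁) → (∀ k, f k ∈ F₁) →
    Φ (altWord a f) =
      φ (a 0 * a (Fin.last n)) *
        (∏ k ∈ Finset.Ioo (0 : Fin (n + 1)) (Fin.last n), φ (a k)) *
        Φ (List.ofFn f).prod

/-- Freeness of a family of subsets with respect to `φ`:
alternating words in centered elements are centered. -/
def IsFreeFamily {ι : Type*} (φ : B → ℂ) (Alg : ι → Set B) : Prop :=
  ∀ (n : ℕ) (idx : Fin (n + 1) → ι) (a : Fin (n + 1) → B),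
    (∀ k : Fin n, idx k.castSucc ≠ idx k.succ) →
    (∀ k, a k ∈ Alg (idx k)) → (∀ k, φ (a k) = 0) →
    φ (List.ofFn a).prod = 0

/-- Infinitesimal freeness of a family of subsets with respect to `(φ, φ')`. -/
def IsInfFree {ι : Type*} (φ φ' : B → ℂ) (Alg : ι → Set B) : Prop :=
  IsFreeFamily φ Alg ∧
  (∀ (n : ℕ) (idx : Fin (n + 1) → ι) (b : Fin (n + 1) → B),
    (∀ k : Fin n, idx k.castSucc ≠ idx k.succ) →
    (∀ k, b k ∈ Alg (idx k)) → (∀ k, φ (b k) = 0) →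
    ¬(Even n ∧ ∀ k, idx k = idx k.rev) →
    φ' (List.ofFn b).prod = 0) ∧
  (∀ (m : ℕ) (idx : Fin (2 * m + 1) → ι) (b : Fin (2 * m + 1) → B),
    (∀ k : Fin (2 * m), idx k.castSucc ≠ idx k.succ) →
    (∀ k, b k ∈ Alg (idx k)) → (∀ k, φ (b k) = 0) →
    (∀ k, idx k = idx k.rev) →
    φ' (List.ofFn b).prod =
      (∏ j : Fin m,
          φ (b (Fin.castLE (by omega) j) * b (Fin.castLE (by omega) j).rev)) *
        φ' (b ⟨m, by omega⟩))

/-- Trivial independence with respect to `Φ`: alternating words of length `≥ 2` vanish. -/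
def TrivIndep {ι : Type*} (Φ : B → ℂ) (Fj : ι → Set B) : Prop :=
  ∀ (n : ℕ) (idx : Fin (n + 2) → ι) (f : Fin (n + 2) → B),
    (∀ k : Fin (n + 1), idx k.castSucc ≠ idx k.succ) →
    (∀ k, f k ∈ Fj (idx k)) →
    Φ (List.ofFn f).prod = 0

/-- Boolean independence with respect to `ψ`. -/
def BoolIndep {ι : Type*} (ψ : B → ℂ) (C : ι → Set B) : Prop :=
  ∀ (n : ℕ) (idx : Fin (n + 1) → ι) (c : Fin (n + 1) → B),
    (∀ k : Fin n, idx k.castSucc ≠ idx k.succ) →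
    (∀ k, c k ∈ C (idx k)) →
    ψ (List.ofFn c).prod = ∏ k, ψ (c k)

/-- Conditional freeness with respect to `(φ, ψ)`. -/
def CFree {ι : Type*} (φ ψ : B → ℂ) (Alg : ι → Set B) : Prop :=
  IsFreeFamily φ Alg ∧
  ∀ (n : ℕ) (idx : Fin (n + 1) → ι) (b : Fin (n + 1) → B),
    (∀ k : Fin n, idx k.castSucc ≠ idx k.succ) →
    (∀ k, b k ∈ Alg (idx k)) → (∀ k, φ (b k) = 0) →
    ψ (List.ofFn b).prod = ∏ k, ψ (b k)

/-- The unital subspace `ℂ·1_B + F₁`. -/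
def unitize (F₁ : Set B) : Set B :=
  {x | ∃ c : ℂ, ∃ f ∈ F₁, x = algebraMap ℂ B c + f}

/-- The set of alternating words `a₀ f₁ a₁ ⋯ fₙ aₙ` with letters from `A₁` and `F₁`. -/
def wordSet (A₁ F₁ : Set B) : Set B :=
  {x | ∃ n : ℕ, 0 < n ∧ ∃ (a : Fin (n + 1) → B) (f : Fin n → B),
    (∀ k, a k ∈ A₁) ∧ (∀ k, f k ∈ F₁) ∧ x = altWord a f}

/-- `A₁⟨F₁⟩₀`: the linear span of all alternating words `a₀ f₁ a₁ ⋯ fₙ aₙ`. -/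
def wordSpan (A₁ F₁ : Set B) : Set B :=
  (Submodule.span ℂ (wordSet A₁ F₁) : Submodule ℂ B)

/-- The type B′ subalgebra `A₁⟨F₁⟩ = A₁ + A₁⟨F₁⟩₀`. -/
def typeBSub (A₁ F₁ : Set B) : Set B :=
  {x | ∃ a ∈ A₁, ∃ f ∈ wordSpan A₁ F₁, x = a + f}

/-- `(tₙ)` is the inverse Markov–Krein transform of the sequence `(mₙ)`:
`(n+1)·mₙ = Σ_{j=0}^{n} tⱼ m_{n−j}` for all `n ≥ 0`. -/
def IsInvMK (m t : ℕ → ℂ) : Prop :=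
  ∀ n : ℕ, ((n : ℂ) + 1) * m n = ∑ j ∈ Finset.range (n + 1), t j * m (n - j)

section Words

variable {ι M : Type*}

/-- A word `w` of letters `(i, x)` is reduced if neighbouring labels differ and each `x` is a
`φ`-centered element of `Alg i`. -/
structure IsReducedWord (φ : M → ℂ) (Alg : ι → Set M) (w : List (ι × M)) : Prop where
  alternating : w.IsChain fun x y => x.1 ≠ y.1
  mem_and_centered : ∀ x ∈ w, x.2 ∈ Alg x.1 ∧ φ x.2 = 0

section IsReducedWord

variable {φ : M → ℂ} {Alg : ι → Set M} {u v w : List (ι × M)}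

lemma isReducedWord_nil : IsReducedWord φ Alg [] :=
  ⟨List.isChain_nil, by simp⟩

lemma isReducedWord_append :
    IsReducedWord φ Alg (u ++ v) ↔ IsReducedWord φ Alg u ∧ IsReducedWord φ Alg v ∧
      ∀ x ∈ u.getLast?, ∀ y ∈ v.head?, x.1 ≠ y.1 := by
  constructor
  · rintro ⟨halt, hmem⟩
    obtain ⟨hu, hv, huv⟩ := List.isChain_append.1 halt
    exact ⟨⟨hu, fun x hx => hmem x (List.mem_append_left v hx)⟩,
      ⟨hv, fun x hx => hmem x (List.mem_append_right u hx)⟩, huv⟩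
  · rintro ⟨hu, hv, huv⟩
    exact ⟨List.isChain_append.2 ⟨hu.alternating, hv.alternating, huv⟩, fun x hx =>
      (List.mem_append.1 hx).elim (hu.mem_and_centered x) (hv.mem_and_centered x)⟩

lemma isReducedWord_cons {x : ι × M} :
    IsReducedWord φ Alg (x :: w) ↔
      (x.2 ∈ Alg x.1 ∧ φ x.2 = 0) ∧ (∀ y ∈ w.head?, x.1 ≠ y.1) ∧ IsReducedWord φ Alg w := by
  constructor
  · rintro ⟨halt, hmem⟩
    obtain ⟨hhead, htail⟩ := List.isChain_cons.1 halt
    exact ⟨hmem x List.mem_cons_self, hhead, htail, fun y hy => hmem y (List.mem_cons_of_mem x hy)⟩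
  · rintro ⟨hx, hhead, hw⟩
    exact ⟨List.isChain_cons.2 ⟨hhead, hw.alternating⟩,
      List.forall_mem_cons.2 ⟨hx, hw.mem_and_centered⟩⟩

lemma IsReducedWord.reverse (hw : IsReducedWord φ Alg w) : IsReducedWord φ Alg w.reverse :=
  ⟨List.isChain_reverse.2 (hw.alternating.imp fun _ _ => Ne.symm),
    fun x hx => hw.mem_and_centered x (List.mem_reverse.1 hx)⟩

lemma isReducedWord_ofFn {n : ℕ} {g : Fin (n + 1) → ι × M} :
    IsReducedWord φ Alg (List.ofFn g) ↔
      (∀ k : Fin n, (g k.castSucc).1 ≠ (g k.succ).1) ∧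
        ∀ k, (g k).2 ∈ Alg (g k).1 ∧ φ (g k).2 = 0 := by
  have chain_iff : (List.ofFn g).IsChain (fun x y => x.1 ≠ y.1) ↔
      ∀ k : Fin n, (g k.castSucc).1 ≠ (g k.succ).1 := by
    rw [List.isChain_iff_getElem]
    simp only [List.length_ofFn, List.getElem_ofFn]
    exact ⟨fun h k => h k (by omega), fun h i hi => h ⟨i, by omega⟩⟩
  rw [← chain_iff]
  exact ⟨fun h => ⟨h.alternating, fun k => h.mem_and_centered _ (List.mem_ofFn.2 ⟨k, rfl⟩)⟩,
    fun h => ⟨h.1, List.forall_mem_ofFn_iff.2 h.2⟩⟩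

end IsReducedWord

/-- The product of the letters of a labelled word. -/
def wordProd [Monoid M] (w : List (ι × M)) : M := (w.map Prod.snd).prod

section wordProd

variable [Monoid M]

@[simp] lemma wordProd_nil : wordProd ([] : List (ι × M)) = 1 := rfl

@[simp] lemma wordProd_cons (x : ι × M) (w : List (ι × M)) :
    wordProd (x :: w) = x.2 * wordProd w := by
  simp [wordProd]

@[simp] lemma wordProd_append (u v : List (ι × M)) :
    wordProd (u ++ v) = wordProd u * wordProd v := by
  simp [wordProd]

lemma wordProd_ofFn {n : ℕ} (g : Fin n → ι × M) :
    wordProd (List.ofFn g) = (List.ofFn fun k => (g k).2).prod := by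
  simp [wordProd, List.map_ofFn, Function.comp_def]

end wordProd

end Words

section Freeness

variable {ι : Type*}

lemma isFreeFamily_iff {R : Type*} [Ring R] {φ : R → ℂ} {Alg : ι → Set R} :
    IsFreeFamily φ Alg ↔ ∀ w, w ≠ [] → IsReducedWord φ Alg w → φ (wordProd w) = 0 := by
  constructor
  · intro h
    rw [List.forall_iff_forall_tuple]
    rintro (_ | n) g hne hg
    · simp at hne
    · obtain ⟨halt, hmem⟩ := isReducedWord_ofFn.1 hg
      rw [wordProd_ofFn]
      exact h n _ _ halt (fun k => (hmem k).1) (fun k => (hmem k).2)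
  · intro h n idx a halt hmem hcent
    have hw := h (List.ofFn fun k => (idx k, a k)) (by simp)
      (isReducedWord_ofFn.2 ⟨halt, fun k => ⟨hmem k, hcent k⟩⟩)
    rwa [wordProd_ofFn] at hw

variable {φ : B →ₗ[ℂ] ℂ} {Alg : ι → Subalgebra ℂ B}

lemma sub_algebraMap_mem_and_centered (hφ1 : φ 1 = 1) {S : Subalgebra ℂ B} {x : B} (hx : x ∈ S) :
    x - algebraMap ℂ B (φ x) ∈ S ∧ φ (x - algebraMap ℂ B (φ x)) = 0 :=
  ⟨S.sub_mem hx (S.algebraMap_mem _), by simp [Algebra.algebraMap_eq_smul_one, hφ1]⟩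

lemma isReducedWord_center_cons (hφ1 : φ 1 = 1) {i : ι} {x y : B} {w : List (ι × B)}
    (hw : IsReducedWord φ (fun i => (Alg i : Set B)) ((i, y) :: w)) (hx : x ∈ Alg i) :
    IsReducedWord φ (fun i => (Alg i : Set B)) ((i, x - algebraMap ℂ B (φ x)) :: w) := by
  obtain ⟨-, hhead, htail⟩ := isReducedWord_cons.1 hw
  exact isReducedWord_cons.2 ⟨sub_algebraMap_mem_and_centered hφ1 hx, hhead, htail⟩

/-- Replacing `x y` by its centering makes the word reduced, so by freeness only the scalar part
of `x y` survives. -/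
lemma IsFreeFamily.map_wordProd_reverse_mul_of_label_eq (hφ1 : φ 1 = 1)
    (hfree : IsFreeFamily φ fun i => (Alg i : Set B)) {i : ι} {x y : B} {u v : List (ι × B)}
    (hu : IsReducedWord φ (fun i => (Alg i : Set B)) ((i, x) :: u))
    (hv : IsReducedWord φ (fun i => (Alg i : Set B)) ((i, y) :: v)) :
    φ (wordProd ((i, x) :: u).reverse * wordProd ((i, y) :: v)) =
      φ (x * y) * φ (wordProd u.reverse * wordProd v) := by
  obtain ⟨⟨hx, -⟩, hxu, hu⟩ := isReducedWord_cons.1 hu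
  have hxy : x * y ∈ Alg i := (Alg i).mul_mem hx (isReducedWord_cons.1 hv).1.1
  have hred : IsReducedWord φ (fun i => (Alg i : Set B))
      (u.reverse ++ (i, x * y - algebraMap ℂ B (φ (x * y))) :: v) := by
    refine isReducedWord_append.2 ⟨hu.reverse, isReducedWord_center_cons hφ1 hv hxy, ?_⟩
    rintro z hz _ ⟨⟩
    exact (hxu z (List.getLast?_reverse ▸ hz)).symm
  have hzero := isFreeFamily_iff.1 hfree _ (by simp) hred
  simp only [wordProd_append, wordProd_cons, sub_mul, mul_sub, map_sub, sub_eq_zero,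
    Algebra.algebraMap_eq_smul_one, smul_mul_assoc, one_mul, mul_smul_comm, map_smul,
    smul_eq_mul] at hzero
  simpa [mul_assoc] using hzero

open scoped Classical in
lemma IsFreeFamily.map_wordProd_reverse_mul (hφ1 : φ 1 = 1)
    (hfree : IsFreeFamily φ fun i => (Alg i : Set B)) {u v : List (ι × B)}
    (hu : IsReducedWord φ (fun i => (Alg i : Set B)) u)
    (hv : IsReducedWord φ (fun i => (Alg i : Set B)) v) :
    φ (wordProd u.reverse * wordProd v) =
      if u.map Prod.fst = v.map Prod.fst then
        (List.zipWith (fun x y => φ (x.2 * y.2)) u v).prod else 0 := by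
  have eq_zero := isFreeFamily_iff.1 hfree
  induction u generalizing v with
  | nil => cases v with
    | nil => simp [hφ1]
    | cons y v => simpa using eq_zero _ (by simp) hv
  | cons x u ih => cases v with
    | nil => simpa using eq_zero _ (by simp) hu.reverse
    | cons y v =>
      obtain ⟨i, x⟩ := x
      obtain ⟨j, y⟩ := y
      obtain rfl | hij := eq_or_ne i j
      · rw [hfree.map_wordProd_reverse_mul_of_label_eq hφ1 hu hv,
          ih (isReducedWord_cons.1 hu).2.2 (isReducedWord_cons.1 hv).2.2]
        simp
      · have hred : IsReducedWord φ (fun i => (Alg i : Set B))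
            (((i, x) :: u).reverse ++ (j, y) :: v) := by
          refine isReducedWord_append.2 ⟨hu.reverse, hv, ?_⟩
          simpa using hij
        rw [← wordProd_append, eq_zero _ (by simp) hred]
        simp [hij]

end Freeness

section Leibniz

variable {ι : Type*}

/-- `∑ₖ φ(b₁ ⋯ bₖ₋₁ bₖ₊₁ ⋯ bₙ) φ'(bₖ)`, the value of `φ'` on `b₁ ⋯ bₙ` predicted by a product rule
in which `φ'` differentiates one letter at a time. -/
def leibnizSum {M : Type*} [Monoid M] (φ φ' : M → ℂ) (w : List (ι × M)) : ℂ :=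
  ∑ k : Fin w.length, φ (wordProd (w.eraseIdx k)) * φ' w[k].2

section

variable {M : Type*} [Monoid M] {φ φ' : M → ℂ}

lemma leibnizSum_eq_zero {w : List (ι × M)} (h : ∀ x ∈ w, φ' x.2 = 0) :
    leibnizSum φ φ' w = 0 :=
  Finset.sum_eq_zero fun _ _ => mul_eq_zero_of_right _ (h _ (List.getElem_mem _))

lemma leibnizSum_append_cons {f : M} (hφf : ∀ x y, φ (x * f * y) = 0) (u v : List (ι × M))
    (i : ι) : leibnizSum φ φ' (u ++ (i, f) :: v) = φ (wordProd u * wordProd v) * φ' f := by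
  rw [leibnizSum, Finset.sum_eq_single ⟨u.length, by simp⟩]
  · simp [List.eraseIdx_append_of_length_le]
  · rintro ⟨k, hk⟩ - hne
    obtain hlt | hgt := Nat.lt_or_gt_of_ne (fun h => hne (Fin.ext h) : k ≠ u.length)
    · simp [List.eraseIdx_append_of_lt_length hlt, ← mul_assoc, hφf]
    · obtain ⟨m, rfl⟩ := Nat.exists_eq_add_of_lt hgt
      simp [List.eraseIdx_append_of_length_le, ← mul_assoc, hφf, add_assoc]
  · simp

end

variable {φ : B →ₗ[ℂ] ℂ} {φ' : B → ℂ} {Alg : ι → Subalgebra ℂ B}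

open scoped Classical in
lemma IsFreeFamily.map_wordProd_eraseIdx (hφ1 : φ 1 = 1)
    (hfree : IsFreeFamily φ fun i => (Alg i : Set B)) {w : List (ι × B)}
    (hw : IsReducedWord φ (fun i => (Alg i : Set B)) w) (k : Fin w.length) :
    φ (wordProd (w.eraseIdx k)) =
      if (w.take k).reverse.map Prod.fst = (w.drop (k + 1)).map Prod.fst then
        (List.zipWith (fun x y => φ (x.2 * y.2)) (w.take k).reverse (w.drop (k + 1))).prod
      else 0 := by
  rw [List.eraseIdx_eq_take_drop_succ, wordProd_append]
  have hleft : IsReducedWord φ (fun i => (Alg i : Set B)) (w.take k) :=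
    (isReducedWord_append.1 ((List.take_append_drop k w).symm ▸ hw)).1
  have hright : IsReducedWord φ (fun i => (Alg i : Set B)) (w.drop (k + 1)) :=
    (isReducedWord_append.1 ((List.take_append_drop (k + 1) w).symm ▸ hw)).2.1
  simpa using hfree.map_wordProd_reverse_mul hφ1 hleft.reverse hright

lemma map_reverse_take_eq_map_drop_iff {α β : Type*} {n : ℕ} (g : Fin (n + 1) → α) (p : α → β)
    (k : Fin (n + 1)) :
    ((List.ofFn g).take k).reverse.map p = ((List.ofFn g).drop (k + 1)).map p ↔
      n = 2 * k ∧ ∀ j, p (g j) = p (g j.rev) := by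
  simp only [List.ext_getElem_iff, List.length_map, List.length_reverse, List.length_take,
    List.length_drop, List.length_ofFn, List.getElem_map, List.getElem_reverse, List.getElem_take,
    List.getElem_drop, List.getElem_ofFn]
  constructor
  · rintro ⟨hlen, hlabel⟩
    have left_of_mid : ∀ j : Fin (n + 1), j < k → p (g j) = p (g j.rev) := fun j hj => by
      convert hlabel (k - 1 - j) (by omega) (by omega) using 3 <;> ext <;> simp <;> omega
    refine ⟨by omega, fun j => ?_⟩
    obtain hj | rfl | hj := lt_trichotomy j k
    · exact left_of_mid j hj
    · congr 2
      ext
      simp only [Fin.val_rev]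
      omega
    · simpa using (left_of_mid j.rev (by rw [Fin.lt_def, Fin.val_rev]; omega)).symm
  · rintro ⟨hn, hpal⟩
    refine ⟨by omega, fun i hi _ => ?_⟩
    rw [hpal]
    congr 2
    ext
    simp only [Fin.val_rev]
    omega

lemma leibnizSum_ofFn_eq_zero (hφ1 : φ 1 = 1)
    (hfree : IsFreeFamily φ fun i => (Alg i : Set B)) {n : ℕ} {g : Fin (n + 1) → ι × B}
    (hg : IsReducedWord φ (fun i => (Alg i : Set B)) (List.ofFn g))
    (hpal : ¬(Even n ∧ ∀ k, (g k).1 = (g k.rev).1)) :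
    leibnizSum φ φ' (List.ofFn g) = 0 := by
  refine Finset.sum_eq_zero fun k _ => ?_
  rw [hfree.map_wordProd_eraseIdx hφ1 hg, if_neg, zero_mul]
  rw [map_reverse_take_eq_map_drop_iff g Prod.fst ⟨k, by simpa using k.2⟩]
  exact fun h => hpal ⟨h.1 ▸ even_two_mul _, h.2⟩

lemma leibnizSum_ofFn_of_palindromic (hφ1 : φ 1 = 1)
    (hfree : IsFreeFamily φ fun i => (Alg i : Set B)) {m : ℕ} {g : Fin (2 * m + 1) → ι × B}
    (hg : IsReducedWord φ (fun i => (Alg i : Set B)) (List.ofFn g))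
    (hpal : ∀ k, (g k).1 = (g k.rev).1) :
    leibnizSum φ φ' (List.ofFn g) =
      (∏ j : Fin m, φ ((g (j.castLE (by omega))).2 * (g (j.castLE (by omega)).rev).2)) *
        φ' (g ⟨m, by omega⟩).2 := by
  have labels_iff := map_reverse_take_eq_map_drop_iff g Prod.fst
  rw [leibnizSum, Finset.sum_eq_single ⟨m, by simp; omega⟩]
  · rw [hfree.map_wordProd_eraseIdx hφ1 hg, if_pos ((labels_iff ⟨m, by omega⟩).2 ⟨rfl, hpal⟩)]
    congr 1
    · rw [← Equiv.prod_comp Fin.revPerm, ← List.prod_ofFn]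
      congr 1
      refine List.ext_getElem (by simp; omega) fun i _ hi => ?_
      rw [List.length_ofFn] at hi
      simp only [List.getElem_zipWith, List.getElem_reverse, List.getElem_take, List.getElem_drop,
        List.getElem_ofFn, List.length_take, List.length_ofFn, Fin.revPerm_apply]
      congr 4 <;> ext <;> simp <;> omega
    · simp only [Fin.getElem_fin, List.getElem_ofFn]
  · intro k _ hk
    rw [hfree.map_wordProd_eraseIdx hφ1 hg, if_neg, zero_mul]
    rw [labels_iff ⟨k, by simpa using k.2⟩]
    rintro ⟨hk', -⟩
    exact hk (Fin.ext (Nat.eq_of_mul_eq_mul_left two_pos hk'.symm))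
  · simp

/-- A reduced word with one letter deleted is no longer alternating around the gap, and freeness
cancels equally labelled neighbours outwards from there. This leaves something only if the deleted
letter is the middle one of a word with palindromic labels. -/
theorem isInfFree_iff_leibnizSum (hφ1 : φ 1 = 1) :
    IsInfFree φ φ' (fun i => (Alg i : Set B)) ↔
      IsFreeFamily φ (fun i => (Alg i : Set B)) ∧
        ∀ w, w ≠ [] → IsReducedWord φ (fun i => (Alg i : Set B)) w →
          φ' (wordProd w) = leibnizSum φ φ' w := by
  have hreduced : ∀ {n : ℕ} (idx : Fin (n + 1) → ι) (b : Fin (n + 1) → B),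
      (∀ k : Fin n, idx k.castSucc ≠ idx k.succ) → (∀ k, b k ∈ (Alg (idx k) : Set B)) →
        (∀ k, φ (b k) = 0) →
          IsReducedWord φ (fun i => (Alg i : Set B)) (List.ofFn fun k => (idx k, b k)) :=
    fun _ _ halt hmem hcent => isReducedWord_ofFn.2 ⟨halt, fun k => ⟨hmem k, hcent k⟩⟩
  refine and_congr_right fun hfree => ⟨?_, fun hleib => ⟨?_, ?_⟩⟩
  · rintro ⟨hzero, hpalindromic⟩
    rw [List.forall_iff_forall_tuple]
    rintro (_ | n) g hne hg
    · simp at hne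
    obtain ⟨halt, hmem⟩ := isReducedWord_ofFn.1 hg
    rw [wordProd_ofFn]
    by_cases hpal : Even n ∧ ∀ k, (g k).1 = (g k.rev).1
    · obtain ⟨⟨m, hm⟩, hpal⟩ := hpal
      obtain rfl : n = 2 * m := by omega
      rw [leibnizSum_ofFn_of_palindromic hφ1 hfree hg hpal]
      exact hpalindromic m _ _ halt (fun k => (hmem k).1) (fun k => (hmem k).2) hpal
    · rw [leibnizSum_ofFn_eq_zero hφ1 hfree hg hpal]
      exact hzero n _ _ halt (fun k => (hmem k).1) (fun k => (hmem k).2) hpal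
  · intro n idx b halt hmem hcent hpal
    have hg := hreduced idx b halt hmem hcent
    have hw := hleib _ (by simp) hg
    rwa [wordProd_ofFn, leibnizSum_ofFn_eq_zero hφ1 hfree hg hpal] at hw
  · intro m idx b halt hmem hcent hpal
    have hg := hreduced idx b halt hmem hcent
    have hw := hleib _ (by simp) hg
    rwa [wordProd_ofFn, leibnizSum_ofFn_of_palindromic hφ1 hfree hg hpal] at hw

end Leibniz

section CyclicAntimonotone

lemma prod_Ioo_zero_last {M : Type*} [CommMonoid M] {k : ℕ} (g : Fin (k + 2) → M) :
    ∏ j ∈ Finset.Ioo 0 (Fin.last (k + 1)), g j = ∏ j : Fin k, g j.succ.castSucc := by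
  rw [← Fin.castSucc_zero, ← Fin.map_castSuccEmb_Ioi, Finset.prod_map, Fin.prod_Ioi_zero]
  rfl

variable {R : Type*} [Ring R]

lemma altWord_cons {n : ℕ} (a₀ f₀ : R) (a : Fin (n + 1) → R) (f : Fin n → R) :
    altWord (Fin.cons a₀ a : Fin (n + 2) → R) (Fin.cons f₀ f : Fin (n + 1) → R) =
      a₀ * f₀ * altWord a f := by
  simp [altWord, List.ofFn_succ, mul_assoc]

lemma altWord_mem_closure {A₁ F₁ : Set R} {n : ℕ} {a : Fin (n + 1) → R} {f : Fin n → R}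
    (ha : ∀ k, a k ∈ A₁) (hf : ∀ k, f k ∈ F₁) : altWord a f ∈ Submonoid.closure (A₁ ∪ F₁) := by
  refine mul_mem (Submonoid.subset_closure (.inl (ha 0))) (list_prod_mem ?_)
  rw [List.forall_mem_ofFn_iff]
  exact fun k => mul_mem (Submonoid.subset_closure (.inr (hf k)))
    (Submonoid.subset_closure (.inl (ha _)))

lemma exists_altWord_of_mem_closure {A₁ : Submonoid R} {F₁ : Set R} {y : R}
    (hy : y ∈ Submonoid.closure (A₁ ∪ F₁)) :
    ∃ (n : ℕ) (a : Fin (n + 1) → R) (f : Fin n → R),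
      (∀ k, a k ∈ A₁) ∧ (∀ k, f k ∈ F₁) ∧ altWord a f = y := by
  induction hy using Submonoid.closure_induction_left with
  | one => exact ⟨0, 1, Fin.elim0, fun _ => one_mem A₁, fun k => k.elim0, by simp [altWord]⟩
  | mul_left x hx y _ ih =>
    obtain ⟨n, a, f, ha, hf, rfl⟩ := ih
    obtain hx | hx := hx
    · exact ⟨n, Fin.cons (x * a 0) (Fin.tail a), f,
        Fin.forall_fin_succ.2 ⟨mul_mem hx (ha 0), fun k => ha k.succ⟩, hf,
        by simp [altWord, Fin.tail, mul_assoc]⟩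
    · exact ⟨n + 1, Fin.cons 1 a, Fin.cons x f, Fin.forall_fin_succ.2 ⟨one_mem A₁, ha⟩,
        Fin.forall_fin_succ.2 ⟨hx, hf⟩, by rw [altWord_cons, one_mul]⟩

/-- The value of `Φ (altWord a f)` prescribed by cyclic-antimonotone independence. -/
def cyclicAntimonotoneValue (φ Φ : R → ℂ) {n : ℕ} (a : Fin (n + 1) → R) (f : Fin n → R) : ℂ :=
  φ (a 0 * a (Fin.last n)) * (∏ k ∈ Finset.Ioo 0 (Fin.last n), φ (a k)) * Φ (List.ofFn f).prod

lemma cyclicAntimonotoneValue_one (φ Φ : R → ℂ) (a : Fin 2 → R) (f : Fin 1 → R) :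
    cyclicAntimonotoneValue φ Φ a f = φ (a 0 * a 1) * Φ (f 0) := by
  rw [cyclicAntimonotoneValue, prod_Ioo_zero_last]
  simp

lemma cyclicAntimonotoneValue_cons_cons (φ Φ : R → ℂ) {n : ℕ} (a₀ a₁ f₁ f₂ : R)
    (a : Fin (n + 1) → R) (f : Fin n → R) :
    cyclicAntimonotoneValue φ Φ (Fin.cons a₀ (Fin.cons a₁ a) : Fin (n + 3) → R)
        (Fin.cons f₁ (Fin.cons f₂ f) : Fin (n + 2) → R) =
      φ a₁ * cyclicAntimonotoneValue φ Φ (Fin.cons a₀ a : Fin (n + 2) → R)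
        (Fin.cons (f₁ * f₂) f : Fin (n + 1) → R) := by
  have last_cons {m : ℕ} (c : R) (b : Fin (m + 1) → R) :
      (Fin.cons c b : Fin (m + 2) → R) (Fin.last (m + 1)) = b (Fin.last m) := by
    rw [← Fin.succ_last, Fin.cons_succ]
  simp only [cyclicAntimonotoneValue, prod_Ioo_zero_last, Fin.prod_univ_succ, List.ofFn_succ,
    List.prod_cons, last_cons, Fin.castSucc_succ, Fin.castSucc_zero, Fin.cons_zero, Fin.cons_succ,
    mul_assoc]
  ring

section

variable {φ Φ : R → ℂ} {A₁ : Submonoid R} {F₁ : Subsemigroup R}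

lemma CyclicAntimonotone.map_mul_mul (h : CyclicAntimonotone φ Φ (A₁ : Set R) (F₁ : Set R))
    {a₀ a₁ f : R} (ha₀ : a₀ ∈ A₁) (ha₁ : a₁ ∈ A₁) (hf : f ∈ F₁) :
    Φ (a₀ * f * a₁) = φ (a₀ * a₁) * Φ f := by
  have hword := (h 1 one_pos ![a₀, a₁] ![f] (by simp [Fin.forall_fin_two, ha₀, ha₁])
    (by simpa)).trans (cyclicAntimonotoneValue_one φ Φ _ _)
  simpa [altWord, mul_assoc] using hword

lemma CyclicAntimonotone.map_merge (h : CyclicAntimonotone φ Φ (A₁ : Set R) (F₁ : Set R))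
    {a₀ f₁ a₁ f₂ y : R} (ha₀ : a₀ ∈ A₁) (hf₁ : f₁ ∈ F₁) (ha₁ : a₁ ∈ A₁) (hf₂ : f₂ ∈ F₁)
    (hy : y ∈ Submonoid.closure ((A₁ : Set R) ∪ F₁)) :
    Φ (a₀ * f₁ * a₁ * f₂ * y) = φ a₁ * Φ (a₀ * f₁ * f₂ * y) := by
  obtain ⟨n, a, f, ha, hf, rfl⟩ := exists_altWord_of_mem_closure hy
  have hword := (h (n + 2) (by omega) (Fin.cons a₀ (Fin.cons a₁ a)) (Fin.cons f₁ (Fin.cons f₂ f))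
    (Fin.forall_fin_succ.2 ⟨ha₀, Fin.forall_fin_succ.2 ⟨ha₁, ha⟩⟩)
    (Fin.forall_fin_succ.2 ⟨hf₁, Fin.forall_fin_succ.2 ⟨hf₂, hf⟩⟩)).trans
    (cyclicAntimonotoneValue_cons_cons ..)
  have hmerged : _ = cyclicAntimonotoneValue .. :=
    h (n + 1) (by omega) (Fin.cons a₀ a) (Fin.cons (f₁ * f₂) f)
      (Fin.forall_fin_succ.2 ⟨ha₀, ha⟩) (Fin.forall_fin_succ.2 ⟨mul_mem hf₁ hf₂, hf⟩)
  rw [← hmerged, altWord_cons, altWord_cons, altWord_cons] at hword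
  simpa only [mul_assoc] using hword

/-- Merging `f₁ a₁ f₂` into `φ(a₁) f₁ f₂` repeatedly leads to the case `n = 1`. -/
theorem cyclicAntimonotone_iff :
    CyclicAntimonotone φ Φ (A₁ : Set R) (F₁ : Set R) ↔
      (∀ a₀ ∈ A₁, ∀ f ∈ F₁, ∀ a₁ ∈ A₁, Φ (a₀ * f * a₁) = φ (a₀ * a₁) * Φ f) ∧
      ∀ a₀ ∈ A₁, ∀ f₁ ∈ F₁, ∀ a₁ ∈ A₁, ∀ f₂ ∈ F₁,
        ∀ y ∈ Submonoid.closure ((A₁ : Set R) ∪ F₁),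
          Φ (a₀ * f₁ * a₁ * f₂ * y) = φ a₁ * Φ (a₀ * f₁ * f₂ * y) := by
  constructor
  · exact fun h => ⟨fun _ ha₀ _ hf _ ha₁ => h.map_mul_mul ha₀ ha₁ hf,
      fun _ ha₀ _ hf₁ _ ha₁ _ hf₂ _ hy => h.map_merge ha₀ hf₁ ha₁ hf₂ hy⟩
  · rintro ⟨h_one, h_merge⟩ n hn
    change ∀ a f, _ → _ → Φ (altWord a f) = cyclicAntimonotoneValue φ Φ a f
    induction n, hn using Nat.le_induction with
    | base =>
      intro a f ha hf
      rw [cyclicAntimonotoneValue_one, ← h_one _ (ha 0) _ (hf 0) _ (ha 1)]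
      simp [altWord, mul_assoc]
    | succ n hn ih =>
      obtain ⟨n, rfl⟩ := Nat.exists_eq_succ_of_ne_zero (Nat.one_le_iff_ne_zero.1 hn)
      intro a f ha hf
      cases a using Fin.consCases with | _ a₀ a
      cases a using Fin.consCases with | _ a₁ a
      cases f using Fin.consCases with | _ f₁ f
      cases f using Fin.consCases with | _ f₂ f
      obtain ⟨ha₀, ha⟩ := Fin.forall_fin_succ.1 ha
      obtain ⟨ha₁, ha⟩ := Fin.forall_fin_succ.1 ha
      obtain ⟨hf₁, hf⟩ := Fin.forall_fin_succ.1 hf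
      obtain ⟨hf₂, hf⟩ := Fin.forall_fin_succ.1 hf
      calc Φ (altWord (Fin.cons a₀ (Fin.cons a₁ a)) (Fin.cons f₁ (Fin.cons f₂ f)))
          = Φ (a₀ * f₁ * a₁ * f₂ * altWord a f) := by simp only [altWord_cons, mul_assoc]
        _ = φ a₁ * Φ (a₀ * f₁ * f₂ * altWord a f) :=
          h_merge _ ha₀ _ hf₁ _ ha₁ _ hf₂ _ (altWord_mem_closure ha hf)
        _ = φ a₁ * Φ (altWord (Fin.cons a₀ a) (Fin.cons (f₁ * f₂) f)) := by
          simp only [altWord_cons, mul_assoc]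
        _ = cyclicAntimonotoneValue φ Φ (Fin.cons a₀ (Fin.cons a₁ a))
              (Fin.cons f₁ (Fin.cons f₂ f)) := by
          rw [cyclicAntimonotoneValue_cons_cons, ih _ _ (Fin.forall_fin_succ.2 ⟨ha₀, ha⟩)
            (Fin.forall_fin_succ.2 ⟨mul_mem hf₁ hf₂, hf⟩)]

end

lemma cyclicAntimonotone_congr {φ Φ Φ' : R → ℂ} {A₁ F₁ : Set R}
    (h : ∀ f ∈ F₁, ∀ x y, Φ (x * f * y) = Φ' (x * f * y)) :
    CyclicAntimonotone φ Φ A₁ F₁ ↔ CyclicAntimonotone φ Φ' A₁ F₁ := by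
  refine forall₂_congr fun n hn => forall₂_congr fun a f => forall₂_congr fun _ hf => ?_
  obtain ⟨n, rfl⟩ := Nat.exists_eq_succ_of_ne_zero hn.ne'
  have hword : Φ (altWord a f) = Φ' (altWord a f) := by
    simpa [altWord, List.ofFn_succ, mul_assoc] using h (f 0) (hf 0) (a 0) _
  have hprod : Φ (List.ofFn f).prod = Φ' (List.ofFn f).prod := by
    simpa [List.ofFn_succ] using h (f 0) (hf 0) 1 _
  rw [hword, hprod]

end CyclicAntimonotone

section ReducedWordSpan

variable {ι : Type*} {φ : B →ₗ[ℂ] ℂ} {Alg : ι → Subalgebra ℂ B}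

lemma mul_wordProd_mem_span (hφ1 : φ 1 = 1) {i : ι} {x : B} (hx : x ∈ Alg i)
    {w : List (ι × B)} (hw : IsReducedWord φ (fun i => (Alg i : Set B)) w) :
    x * wordProd w ∈
      Submodule.span ℂ (wordProd '' {w | IsReducedWord φ (fun i => (Alg i : Set B)) w}) := by
  have mem_of_centered {y : B} {v : List (ι × B)}
      (hyv : IsReducedWord φ (fun i => (Alg i : Set B)) ((i, y - algebraMap ℂ B (φ y)) :: v)) :
      y * wordProd v ∈
        Submodule.span ℂ (wordProd '' {w | IsReducedWord φ (fun i => (Alg i : Set B)) w}) := by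
    have split_scalar : y * wordProd v =
        wordProd ((i, y - algebraMap ℂ B (φ y)) :: v) + φ y • wordProd v := by
      simp [sub_mul, Algebra.algebraMap_eq_smul_one]
    rw [split_scalar]
    exact add_mem (Submodule.subset_span ⟨_, hyv, rfl⟩)
      (Submodule.smul_mem _ _ (Submodule.subset_span ⟨v, (isReducedWord_cons.1 hyv).2.2, rfl⟩))
  by_cases hhead : ∀ y ∈ w.head?, i ≠ y.1
  · exact mem_of_centered
      (isReducedWord_cons.2 ⟨sub_algebraMap_mem_and_centered hφ1 hx, hhead, hw⟩)
  · obtain ⟨⟨_, y⟩, hy, rfl⟩ : ∃ y ∈ w.head?, i = y.1 := by simpa using hhead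
    obtain ⟨v, rfl⟩ := List.head?_eq_some_iff.1 hy
    have hxy := mul_mem hx (isReducedWord_cons.1 hw).1.1
    simpa [mul_assoc] using mem_of_centered (isReducedWord_center_cons hφ1 hw hxy)

lemma adjoin_iUnion_le_span_wordProd (hφ1 : φ 1 = 1) :
    Subalgebra.toSubmodule (Algebra.adjoin ℂ (⋃ i, (Alg i : Set B))) ≤
      Submodule.span ℂ (wordProd '' {w | IsReducedWord φ (fun i => (Alg i : Set B)) w}) := by
  rw [Algebra.adjoin_eq_span, Submodule.span_le]
  intro x hx
  induction hx using Submonoid.closure_induction_left with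
  | one => exact Submodule.subset_span ⟨[], isReducedWord_nil, rfl⟩
  | mul_left x hx y _ ih =>
    obtain ⟨i, hi⟩ := Set.mem_iUnion.1 hx
    refine Submodule.span_induction (p := fun y _ => x * y ∈ Submodule.span ℂ _)
      ?_ ?_ (fun y z _ _ hy hz => ?_) (fun c y _ hy => ?_) ih
    · rintro _ ⟨w, hw, rfl⟩
      exact mul_wordProd_mem_span hφ1 hi hw
    · simp
    · rw [mul_add]
      exact add_mem hy hz
    · rw [mul_smul_comm]
      exact Submodule.smul_mem _ c hy

lemma adjoin_iUnion_induction (hφ1 : φ 1 = 1) {p : B → Prop}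
    (word : ∀ w, IsReducedWord φ (fun i => (Alg i : Set B)) w → p (wordProd w))
    (add : ∀ x y, p x → p y → p (x + y)) (smul : ∀ (c : ℂ) x, p x → p (c • x)) {x : B}
    (hx : x ∈ Algebra.adjoin ℂ (⋃ i, (Alg i : Set B))) : p x := by
  have zero : p 0 := by simpa using smul 0 _ (word [] isReducedWord_nil)
  exact Submodule.span_induction (p := fun x _ => p x) (Set.forall_mem_image.2 word) zero
    (fun x y _ _ => add x y) (fun c x _ => smul c x) (adjoin_iUnion_le_span_wordProd hφ1 hx)

end ReducedWordSpan

section UnitizedFamily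

lemma unitize_eq_adjoin (F₁ : NonUnitalSubalgebra ℂ B) :
    unitize (F₁ : Set B) = Algebra.adjoin ℂ (F₁ : Set B) := by
  ext x
  rw [SetLike.mem_coe, ← NonUnitalSubalgebra.unitization_range]
  constructor
  · rintro ⟨c, f, hf, rfl⟩
    exact ⟨.inl c + .inr ⟨f, hf⟩, by simp⟩
  · rintro ⟨z, rfl⟩
    exact ⟨z.fst, z.snd, z.snd.2, rfl⟩

variable {ι : Type*}

/-- The family consisting of the `Ai i`, labelled `some i`, and of the unital algebra `ℂ·1 + F₁`,
labelled `none`. -/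
def unitizedFamily (Ai : ι → Subalgebra ℂ B) (F₁ : NonUnitalSubalgebra ℂ B) :
    Option ι → Subalgebra ℂ B :=
  fun o => o.elim (Algebra.adjoin ℂ (F₁ : Set B)) Ai

lemma coe_unitizedFamily (Ai : ι → Subalgebra ℂ B) (F₁ : NonUnitalSubalgebra ℂ B) :
    (fun o => (unitizedFamily Ai F₁ o : Set B)) =
      fun o => o.elim (unitize (F₁ : Set B)) (fun i => (Ai i : Set B)) := by
  funext o
  cases o with
  | none => exact (unitize_eq_adjoin F₁).symm
  | some i => rfl

/-- A word in the `Ai i`, seen as a word in `unitizedFamily Ai F₁`. -/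
def liftWord {M : Type*} (w : List (ι × M)) : List (Option ι × M) :=
  w.map (Prod.map some id)

lemma exists_liftWord_or_append {M : Type*} (w : List (Option ι × M)) :
    (∃ u, w = liftWord u) ∨ ∃ u f r, w = liftWord u ++ (none, f) :: r := by
  induction w with
  | nil => exact .inl ⟨[], rfl⟩
  | cons x w ih =>
    obtain ⟨_ | i, x⟩ := x
    · exact .inr ⟨[], x, w, rfl⟩
    · obtain ⟨u, rfl⟩ | ⟨u, f, r, rfl⟩ := ih
      · exact .inl ⟨(i, x) :: u, rfl⟩
      · exact .inr ⟨(i, x) :: u, f, r, rfl⟩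

@[simp] lemma wordProd_liftWord {M : Type*} [Monoid M] (w : List (ι × M)) :
    wordProd (liftWord w) = wordProd w := by
  simp [wordProd, liftWord, Function.comp_def]

variable {φ : B →ₗ[ℂ] ℂ} {Ai : ι → Subalgebra ℂ B} {F₁ : NonUnitalSubalgebra ℂ B}
  {u : List (ι × B)} {r : List (Option ι × B)} {f : B}

lemma isReducedWord_liftWord :
    IsReducedWord φ (fun o => (unitizedFamily Ai F₁ o : Set B)) (liftWord u) ↔
      IsReducedWord φ (fun i => (Ai i : Set B)) u := by
  have alternating_iff : (liftWord u).IsChain (fun x y => x.1 ≠ y.1) ↔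
      u.IsChain fun x y => x.1 ≠ y.1 := by
    simp [liftWord, List.isChain_map]
  have mem_iff : (∀ x ∈ liftWord u, x.2 ∈ (unitizedFamily Ai F₁ x.1 : Set B) ∧ φ x.2 = 0) ↔
      ∀ x ∈ u, x.2 ∈ (Ai x.1 : Set B) ∧ φ x.2 = 0 := by
    rw [liftWord, List.forall_mem_map]
    rfl
  exact ⟨fun h => ⟨alternating_iff.1 h.1, mem_iff.1 h.2⟩,
    fun h => ⟨alternating_iff.2 h.1, mem_iff.2 h.2⟩⟩

lemma isReducedWord_liftWord_append_cons_none :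
    IsReducedWord φ (fun o => (unitizedFamily Ai F₁ o : Set B)) (liftWord u ++ (none, f) :: r) ↔
      IsReducedWord φ (fun i => (Ai i : Set B)) u ∧
        IsReducedWord φ (fun o => (unitizedFamily Ai F₁ o : Set B)) ((none, f) :: r) := by
  rw [isReducedWord_append, isReducedWord_liftWord]
  refine ⟨fun h => ⟨h.1, h.2.1⟩, fun ⟨hu, hr⟩ => ⟨hu, hr, ?_⟩⟩
  rintro x hx _ ⟨⟩
  obtain ⟨y, -, rfl⟩ := List.mem_map.1 (List.mem_of_getLast? hx)
  simp

lemma wordProd_mem_adjoin (hu : IsReducedWord φ (fun i => (Ai i : Set B)) u) :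
    wordProd u ∈ Algebra.adjoin ℂ (⋃ i, (Ai i : Set B)) :=
  list_prod_mem (List.forall_mem_map.2 fun x hx =>
    Algebra.subset_adjoin (Set.mem_iUnion.2 ⟨x.1, (hu.mem_and_centered x hx).1⟩))

section

variable (hφ1 : φ 1 = 1) (hφF : ∀ f ∈ F₁, ∀ x y, φ (x * f * y) = 0)
include hφ1 hφF

lemma mem_adjoin_and_centered_iff {x : B} :
    x ∈ Algebra.adjoin ℂ (F₁ : Set B) ∧ φ x = 0 ↔ x ∈ F₁ := by
  have hφ0 : ∀ g ∈ F₁, φ g = 0 := fun g hg => by simpa using hφF g hg 1 1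
  refine ⟨?_, fun hx => ⟨Algebra.subset_adjoin hx, hφ0 x hx⟩⟩
  rw [← SetLike.mem_coe, ← unitize_eq_adjoin]
  rintro ⟨⟨c, g, hg, rfl⟩, hx⟩
  obtain rfl : c = 0 := by simpa [Algebra.algebraMap_eq_smul_one, hφ1, hφ0 g hg] using hx
  simpa using hg

lemma isReducedWord_cons_none_iff :
    IsReducedWord φ (fun o => (unitizedFamily Ai F₁ o : Set B)) ((none, f) :: r) ↔
      f ∈ F₁ ∧ (∀ y ∈ r.head?, none ≠ y.1) ∧
        IsReducedWord φ (fun o => (unitizedFamily Ai F₁ o : Set B)) r := by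
  rw [isReducedWord_cons, ← mem_adjoin_and_centered_iff hφ1 hφF]
  rfl

lemma exists_isReducedWord_cons_none (hf : f ∈ F₁)
    (hr : IsReducedWord φ (fun o => (unitizedFamily Ai F₁ o : Set B)) r) :
    ∃ g s, IsReducedWord φ (fun o => (unitizedFamily Ai F₁ o : Set B)) ((none, g) :: s) ∧
      g * wordProd s = f * wordProd r := by
  by_cases hhead : ∀ y ∈ r.head?, none ≠ y.1
  · exact ⟨f, r, (isReducedWord_cons_none_iff hφ1 hφF).2 ⟨hf, hhead, hr⟩, rfl⟩
  · obtain ⟨⟨_, g⟩, hg, rfl⟩ : ∃ y ∈ r.head?, none = y.1 := by simpa using hhead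
    obtain ⟨s, rfl⟩ := List.head?_eq_some_iff.1 hg
    obtain ⟨hg, hs⟩ := (isReducedWord_cons_none_iff hφ1 hφF).1 hr
    exact ⟨f * g, s, (isReducedWord_cons_none_iff hφ1 hφF).2 ⟨mul_mem hf hg, hs⟩,
      by simp [mul_assoc]⟩

lemma wordProd_mem_closure
    (hr : IsReducedWord φ (fun o => (unitizedFamily Ai F₁ o : Set B)) r) :
    wordProd r ∈ Submonoid.closure ((Algebra.adjoin ℂ (⋃ i, (Ai i : Set B)) : Set B) ∪ F₁) := by
  refine list_prod_mem (List.forall_mem_map.2 fun x hx => Submonoid.subset_closure ?_)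
  obtain ⟨_ | i, x⟩ := x
  · exact .inr ((mem_adjoin_and_centered_iff hφ1 hφF).1 (hr.mem_and_centered _ hx))
  · exact .inl (Algebra.subset_adjoin (Set.mem_iUnion.2 ⟨i, (hr.mem_and_centered _ hx).1⟩))

lemma isFreeFamily_unitizedFamily_iff :
    IsFreeFamily φ (fun o => (unitizedFamily Ai F₁ o : Set B)) ↔
      IsFreeFamily φ (fun i => (Ai i : Set B)) := by
  simp only [isFreeFamily_iff]
  constructor
  · intro h u hne hu
    simpa using h (liftWord u) (by simpa [liftWord] using hne) (isReducedWord_liftWord.2 hu)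
  · intro h w hne hw
    obtain ⟨u, rfl⟩ | ⟨u, f, r, rfl⟩ := exists_liftWord_or_append w
    · rw [wordProd_liftWord]
      exact h u (by rintro rfl; exact hne rfl) (isReducedWord_liftWord.1 hw)
    · have hf := ((isReducedWord_cons_none_iff hφ1 hφF).1
        (isReducedWord_liftWord_append_cons_none.1 hw).2).1
      simpa [mul_assoc] using hφF f hf (wordProd u) (wordProd r)

end

end UnitizedFamily

section FactorsAtFirstNone

variable {ι : Type*} {φ φ' : B →ₗ[ℂ] ℂ} {Ai : ι → Subalgebra ℂ B} {F₁ : NonUnitalSubalgebra ℂ B}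

/-- Every reduced word of `unitizedFamily Ai F₁` factors under `φ'` at its first letter labelled
`none`: this letter is evaluated by `φ'` and the rest of the word by `φ`. It is the common form of
infinitesimal freeness and of cyclic-antimonotone independence. -/
def FactorsAtFirstNone (φ φ' : B → ℂ) (Ai : ι → Subalgebra ℂ B) (F₁ : NonUnitalSubalgebra ℂ B) :
    Prop :=
  ∀ u f r,
    IsReducedWord φ (fun o => (unitizedFamily Ai F₁ o : Set B)) (liftWord u ++ (none, f) :: r) →
      φ' (wordProd u * f * wordProd r) = φ (wordProd u * wordProd r) * φ' f

lemma closure_le_adjoin_unitizedFamily :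
    Submonoid.closure ((Algebra.adjoin ℂ (⋃ i, (Ai i : Set B)) : Set B) ∪ F₁) ≤
      (Algebra.adjoin ℂ (⋃ o, (unitizedFamily Ai F₁ o : Set B))).toSubmonoid :=
  Submonoid.closure_le.2 (Set.union_subset
    (Algebra.adjoin_mono (Set.iUnion_subset fun i =>
      Set.subset_iUnion (fun o => (unitizedFamily Ai F₁ o : Set B)) (some i)))
    fun _ hf => Algebra.subset_adjoin (Set.mem_iUnion.2 ⟨none, Algebra.subset_adjoin hf⟩))

section

variable (hφ1 : φ 1 = 1) (hφF : ∀ f ∈ F₁, ∀ x y, φ (x * f * y) = 0)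
include hφ1 hφF

/-- A word in the `Ai i` has no nonzero term in its Leibniz sum, and a word with letters from `F₁`
has at most one: if one of two letters from `F₁` is deleted, the other one makes `φ` vanish. -/
theorem leibnizRule_iff_factorsAtFirstNone
    (hφ'A : ∀ a ∈ Algebra.adjoin ℂ (⋃ i, (Ai i : Set B)), φ' a = 0) :
    (∀ w, w ≠ [] → IsReducedWord φ (fun o => (unitizedFamily Ai F₁ o : Set B)) w →
      φ' (wordProd w) = leibnizSum φ φ' w) ↔ FactorsAtFirstNone φ φ' Ai F₁ := by
  have leibnizSum_eq {u f r} (hw : IsReducedWord φ (fun o => (unitizedFamily Ai F₁ o : Set B))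
      (liftWord u ++ (none, f) :: r)) :
      leibnizSum φ φ' (liftWord u ++ (none, f) :: r) = φ (wordProd u * wordProd r) * φ' f := by
    have hf := ((isReducedWord_cons_none_iff hφ1 hφF).1
      (isReducedWord_liftWord_append_cons_none.1 hw).2).1
    rw [leibnizSum_append_cons (hφF f hf), wordProd_liftWord]
  constructor
  · intro h u f r hw
    simpa [leibnizSum_eq hw, mul_assoc] using h _ (by simp) hw
  · intro h w _ hw
    obtain ⟨u, rfl⟩ | ⟨u, f, r, rfl⟩ := exists_liftWord_or_append w
    · have hu := isReducedWord_liftWord.1 hw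
      rw [wordProd_liftWord, hφ'A _ (wordProd_mem_adjoin hu), leibnizSum_eq_zero]
      refine List.forall_mem_map.2 fun x hx => hφ'A _ ?_
      exact Algebra.subset_adjoin (Set.mem_iUnion.2 ⟨x.1, (hu.mem_and_centered x hx).1⟩)
    · simpa [leibnizSum_eq hw, mul_assoc] using h u f r hw

lemma FactorsAtFirstNone.map_mul_mul (h : FactorsAtFirstNone φ φ' Ai F₁) {a₀ a₁ f : B}
    (ha₀ : a₀ ∈ Algebra.adjoin ℂ (⋃ i, (Ai i : Set B))) (hf : f ∈ F₁)
    (ha₁ : a₁ ∈ Algebra.adjoin ℂ (⋃ i, (Ai i : Set B))) :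
    φ' (a₀ * f * a₁) = φ (a₀ * a₁) * φ' f := by
  refine adjoin_iUnion_induction hφ1 (p := fun a₀ => φ' (a₀ * f * a₁) = φ (a₀ * a₁) * φ' f)
    (fun u hu => ?_) (fun x y hx hy => ?_) (fun c x hx => ?_) ha₀
  · refine adjoin_iUnion_induction hφ1
      (p := fun a₁ => φ' (wordProd u * f * a₁) = φ (wordProd u * a₁) * φ' f)
      (fun v hv => ?_) (fun x y hx hy => ?_) (fun c x hx => ?_) ha₁
    · have hword := h u f (liftWord v) (isReducedWord_liftWord_append_cons_none.2 ⟨hu,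
        (isReducedWord_cons_none_iff hφ1 hφF).2 ⟨hf, by cases v <;> simp [liftWord],
          isReducedWord_liftWord.2 hv⟩⟩)
      rwa [wordProd_liftWord] at hword
    · simp only [mul_add, map_add, hx, hy, add_mul]
    · simp only [mul_smul_comm, map_smul, hx, smul_eq_mul]
      ring
  · simp only [add_mul, map_add, hx, hy]
  · simp only [smul_mul_assoc, map_smul, hx, smul_eq_mul]
    ring

lemma FactorsAtFirstNone.map_wordProd_eq_zero (h : FactorsAtFirstNone φ φ' Ai F₁)
    {u v : List (ι × B)} {f g y : B} (hu : IsReducedWord φ (fun i => (Ai i : Set B)) u)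
    (hv : IsReducedWord φ (fun i => (Ai i : Set B)) v) (hne : v ≠ []) (hf : f ∈ F₁) (hg : g ∈ F₁)
    (hy : y ∈ Algebra.adjoin ℂ (⋃ o, (unitizedFamily Ai F₁ o : Set B))) :
    φ' (wordProd u * f * wordProd v * g * y) = 0 := by
  refine adjoin_iUnion_induction hφ1
    (p := fun y => φ' (wordProd u * f * wordProd v * g * y) = 0)
    (fun r hr => ?_) (fun x y hx hy => ?_) (fun c x hx => ?_) hy
  · obtain ⟨g', s, hs, hgr⟩ := exists_isReducedWord_cons_none hφ1 hφF hg hr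
    have hg' := ((isReducedWord_cons_none_iff hφ1 hφF).1 hs).1
    have hhead : ∀ y ∈ (liftWord v ++ (none, g') :: s).head?, none ≠ y.1 := by
      obtain ⟨x, v, rfl⟩ := List.exists_cons_of_ne_nil hne
      simp [liftWord]
    have hword := h u f (liftWord v ++ (none, g') :: s) (isReducedWord_liftWord_append_cons_none.2
      ⟨hu, (isReducedWord_cons_none_iff hφ1 hφF).2 ⟨hf, hhead,
        isReducedWord_liftWord_append_cons_none.2 ⟨hv, hs⟩⟩⟩)
    have hzero := hφF g' hg' (wordProd u * wordProd v) (wordProd s)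
    simp only [wordProd_append, wordProd_liftWord, wordProd_cons, ← mul_assoc] at hword hzero
    rw [hzero, zero_mul] at hword
    simpa only [mul_assoc, hgr] using hword
  · simp only [mul_add, map_add, hx, hy, add_zero]
  · simp only [mul_smul_comm, map_smul, hx, smul_zero]

lemma FactorsAtFirstNone.map_merge (h : FactorsAtFirstNone φ φ' Ai F₁)
    (hfree : IsFreeFamily φ fun i => (Ai i : Set B)) {a₀ f₁ a₁ f₂ y : B}
    (ha₀ : a₀ ∈ Algebra.adjoin ℂ (⋃ i, (Ai i : Set B))) (hf₁ : f₁ ∈ F₁)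
    (ha₁ : a₁ ∈ Algebra.adjoin ℂ (⋃ i, (Ai i : Set B))) (hf₂ : f₂ ∈ F₁)
    (hy : y ∈ Algebra.adjoin ℂ (⋃ o, (unitizedFamily Ai F₁ o : Set B))) :
    φ' (a₀ * f₁ * a₁ * f₂ * y) = φ a₁ * φ' (a₀ * f₁ * f₂ * y) := by
  refine adjoin_iUnion_induction hφ1
    (p := fun a₀ => φ' (a₀ * f₁ * a₁ * f₂ * y) = φ a₁ * φ' (a₀ * f₁ * f₂ * y))
    (fun u hu => ?_) (fun x z hx hz => ?_) (fun c x hx => ?_) ha₀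
  · refine adjoin_iUnion_induction hφ1
      (p := fun a₁ => φ' (wordProd u * f₁ * a₁ * f₂ * y) =
        φ a₁ * φ' (wordProd u * f₁ * f₂ * y))
      (fun v hv => ?_) (fun x z hx hz => ?_) (fun c x hx => ?_) ha₁
    · obtain rfl | hne := eq_or_ne v []
      · simp [hφ1]
      · rw [h.map_wordProd_eq_zero hφ1 hφF hu hv hne hf₁ hf₂ hy,
          isFreeFamily_iff.1 hfree v hne hv, zero_mul]
    · simp only [mul_add, add_mul, map_add, hx, hz]
    · simp only [mul_smul_comm, smul_mul_assoc, map_smul, hx, smul_eq_mul]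
      ring
  · simp only [add_mul, mul_add, map_add, hx, hz]
  · simp only [smul_mul_assoc, map_smul, hx, smul_eq_mul, mul_left_comm]

lemma CyclicAntimonotone.factorsAtFirstNone (hfree : IsFreeFamily φ fun i => (Ai i : Set B))
    (h : CyclicAntimonotone φ φ' (Algebra.adjoin ℂ (⋃ i, (Ai i : Set B)) : Set B) F₁) :
    FactorsAtFirstNone φ φ' Ai F₁ := by
  replace h : CyclicAntimonotone φ φ'
    ((Algebra.adjoin ℂ (⋃ i, (Ai i : Set B))).toSubmonoid : Set B)
    (F₁.toSubsemigroup : Set B) := h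
  intro u f r hw
  obtain ⟨hu, hfr⟩ := isReducedWord_liftWord_append_cons_none.1 hw
  obtain ⟨hf, hhead, hr⟩ := (isReducedWord_cons_none_iff hφ1 hφF).1 hfr
  obtain ⟨v, rfl⟩ | ⟨v, g, s, rfl⟩ := exists_liftWord_or_append r
  · rw [wordProd_liftWord]
    exact h.map_mul_mul (wordProd_mem_adjoin hu)
      (wordProd_mem_adjoin (isReducedWord_liftWord.1 hr)) hf
  · obtain ⟨hv, hgs⟩ := isReducedWord_liftWord_append_cons_none.1 hr
    obtain ⟨hg, -, hs⟩ := (isReducedWord_cons_none_iff hφ1 hφF).1 hgs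
    have hne : v ≠ [] := by
      rintro rfl
      simp [liftWord] at hhead
    have hmerge := h.map_merge (wordProd_mem_adjoin hu) hf (wordProd_mem_adjoin hv) hg
      (wordProd_mem_closure hφ1 hφF hs)
    have hzero := hφF g hg (wordProd u * wordProd v) (wordProd s)
    rw [isFreeFamily_iff.1 hfree v hne hv, zero_mul] at hmerge
    simp only [wordProd_append, wordProd_liftWord, wordProd_cons, ← mul_assoc] at hmerge hzero ⊢
    rw [hmerge, hzero, zero_mul]

theorem cyclicAntimonotone_iff_factorsAtFirstNone
    (hfree : IsFreeFamily φ fun i => (Ai i : Set B)) :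
    CyclicAntimonotone φ φ' (Algebra.adjoin ℂ (⋃ i, (Ai i : Set B)) : Set B) F₁ ↔
      FactorsAtFirstNone φ φ' Ai F₁ :=
  ⟨CyclicAntimonotone.factorsAtFirstNone hφ1 hφF hfree, fun h =>
    (cyclicAntimonotone_iff (A₁ := (Algebra.adjoin ℂ (⋃ i, (Ai i : Set B))).toSubmonoid)
      (F₁ := F₁.toSubsemigroup)).2
      ⟨fun _ ha₀ _ hf _ ha₁ => h.map_mul_mul hφ1 hφF ha₀ hf ha₁,
        fun _ ha₀ _ hf₁ _ ha₁ _ hf₂ _ hy =>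
          h.map_merge hφ1 hφF hfree ha₀ hf₁ ha₁ hf₂ (closure_le_adjoin_unitizedFamily hy)⟩⟩

end

end FactorsAtFirstNone

theorem statement4_general {φ φ' : B →ₗ[ℂ] ℂ} {Φ : B → ℂ} (hφ1 : φ 1 = 1) {ι : Type*}
    (Ai : ι → Subalgebra ℂ B) (F₁ : NonUnitalSubalgebra ℂ B)
    (hφF : ∀ f ∈ F₁, ∀ x y, φ (x * f * y) = 0)
    (hφ'A : ∀ a ∈ Algebra.adjoin ℂ (⋃ i, (Ai i : Set B)), φ' a = 0)
    (hφ'F : ∀ f ∈ F₁, ∀ x y, φ' (x * f * y) = Φ (x * f * y)) :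
    (IsFreeFamily φ (fun i => (Ai i : Set B)) ∧
      CyclicAntimonotone φ Φ (Algebra.adjoin ℂ (⋃ i, (Ai i : Set B)) : Set B) F₁) ↔
    IsInfFree φ φ' (fun o : Option ι => o.elim (unitize (F₁ : Set B)) fun i => (Ai i : Set B)) := by
  rw [← coe_unitizedFamily, isInfFree_iff_leibnizSum hφ1,
    leibnizRule_iff_factorsAtFirstNone hφ1 hφF hφ'A, isFreeFamily_unitizedFamily_iff hφ1 hφF,
    ← cyclicAntimonotone_congr hφ'F]
  exact and_congr_right (cyclicAntimonotone_iff_factorsAtFirstNone hφ1 hφF)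

lemma mem_of_mem_nonUnitalAdjoin {F : Submodule ℂ B} (hF : ∀ b : B, ∀ f ∈ F, b * f ∈ F)
    {s : Set B} (hs : s ⊆ F) {f : B} (hf : f ∈ NonUnitalAlgebra.adjoin ℂ s) : f ∈ F :=
  NonUnitalAlgebra.adjoin_le (S := F.toNonUnitalSubalgebra fun x y _ => hF x y) hs hf

theorem statement4
    {B : Type*} [Ring B] [Algebra ℂ B]
    (A : Subalgebra ℂ B) (F : Submodule ℂ B)
    (hFmulL : ∀ b : B, ∀ f ∈ F, b * f ∈ F)
    (hFmulR : ∀ b : B, ∀ f ∈ F, f * b ∈ F)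
    (hAF : ∀ x ∈ A, x ∈ F → x = 0)
    (hdec : ∀ x : B, ∃ a ∈ A, ∃ f ∈ F, x = a + f)
    (φ Φ φ' : B →ₗ[ℂ] ℂ)
    (hφ1 : φ 1 = 1) (hφF : ∀ f ∈ F, φ f = 0)
    (hφ'A : ∀ a ∈ A, φ' a = 0) (hφ'F : ∀ f ∈ F, φ' f = Φ f)
    {ι κ : Type*}
    (Ai : ι → Subalgebra ℂ B) (hAi : ∀ i, Ai i ≤ A)
    (Fj : κ → NonUnitalSubalgebra ℂ B) (hFj : ∀ j, ∀ f ∈ Fj j, f ∈ F) :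
    (IsFreeFamily ⇑φ (fun i => (Ai i : Set B)) ∧
      CyclicAntimonotone ⇑φ ⇑Φ
        (Algebra.adjoin ℂ (⋃ i, (Ai i : Set B)) : Set B)
        (NonUnitalAlgebra.adjoin ℂ (⋃ j, (Fj j : Set B)) : Set B)) ↔
    IsInfFree ⇑φ ⇑φ'
      (fun o : Option ι =>
        o.elim
          (unitize (NonUnitalAlgebra.adjoin ℂ (⋃ j, (Fj j : Set B)) : Set B))
          (fun i => (Ai i : Set B))) := by
  have mem_ideal : ∀ f ∈ NonUnitalAlgebra.adjoin ℂ (⋃ j, (Fj j : Set B)), ∀ x y, x * f * y ∈ F :=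
    fun f hf x y => hFmulR y _ <| hFmulL x f <|
      mem_of_mem_nonUnitalAdjoin hFmulL (Set.iUnion_subset hFj) hf
  exact statement4_general hφ1 Ai _ (fun f hf x y => hφF _ (mem_ideal f hf x y))
    (fun a ha => hφ'A a (Algebra.adjoin_le (Set.iUnion_subset hAi) ha))
    fun f hf x y => hφ'F _ (mem_ideal f hf x y)

end TypeBPrime
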